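/- arXiv:alg-geom/9612008 — 10 statements merged into one kernel-verified Lean document; each statement's English description precedes it below -/
import Mathlib

section
/- Let a₁, a₂, x ∈ M_{k×k}(ℂ), b ∈ M_{k×n}(ℂ), c ∈ M_{n×k}(ℂ). Then B(p,q)·A(p,q) = 0 for all p = (x₁,x₂,x₃) ∈ ℂ³ and q = (y₁,y₂) ∈ ℂ² satisfying x₁y₁ + x₂y₂ = 0, if and only if the integrability condition a₁xa₂ − a₂xa₁ + bc = 0 holds. -/
open Matrix

/-- The monad map `A(p,q)` of a `ℂP̄²`-configuration `(a₁, a₂, x, b, c)`: the 5×2 block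
matrix with first column `(x₃a₁ ; x₁·1 − x₃xa₁ ; x₃a₂ ; x₂·1 − x₃xa₂ ; x₃c)` and second
column `(−y₂·1 ; 0 ; y₁·1 ; 0 ; 0)`. -/
noncomputable def cpbarA {k n : ℕ} (a₁ a₂ x : Matrix (Fin k) (Fin k) ℂ) (c : Matrix (Fin n) (Fin k) ℂ)
    (p : ℂ × ℂ × ℂ) (q : ℂ × ℂ) :
    Matrix (((Fin k ⊕ Fin k) ⊕ (Fin k ⊕ Fin k)) ⊕ Fin n) (Fin k ⊕ Fin k) ℂ :=
  Matrix.fromCols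
    (Matrix.fromRows
      (Matrix.fromRows
        (Matrix.fromRows (p.2.2 • a₁)
          (p.1 • (1 : Matrix (Fin k) (Fin k) ℂ) - p.2.2 • (x * a₁)))
        (Matrix.fromRows (p.2.2 • a₂)
          (p.2.1 • (1 : Matrix (Fin k) (Fin k) ℂ) - p.2.2 • (x * a₂))))
      (p.2.2 • c))
    (Matrix.fromRows
      (Matrix.fromRows
        (Matrix.fromRows (-(q.2 • (1 : Matrix (Fin k) (Fin k) ℂ))) (0 : Matrix (Fin k) (Fin k) ℂ))
        (Matrix.fromRows (q.1 • (1 : Matrix (Fin k) (Fin k) ℂ)) (0 : Matrix (Fin k) (Fin k) ℂ)))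
      (0 : Matrix (Fin n) (Fin k) ℂ))

/-- The monad map `B(p,q)` of a `ℂP̄²`-configuration `(a₁, a₂, x, b, c)`: the 2×5 block
matrix with first row `(x₂·1 , x₃a₂ , −x₁·1 , −x₃a₁ , x₃b)` and second row
`(y₁x , y₁·1 , y₂x , y₂·1 , 0)`. -/
noncomputable def cpbarB {k n : ℕ} (a₁ a₂ x : Matrix (Fin k) (Fin k) ℂ) (b : Matrix (Fin k) (Fin n) ℂ)
    (p : ℂ × ℂ × ℂ) (q : ℂ × ℂ) :
    Matrix (Fin k ⊕ Fin k) (((Fin k ⊕ Fin k) ⊕ (Fin k ⊕ Fin k)) ⊕ Fin n) ℂ :=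
  Matrix.fromRows
    (Matrix.fromCols
      (Matrix.fromCols
        (Matrix.fromCols (p.2.1 • (1 : Matrix (Fin k) (Fin k) ℂ)) (p.2.2 • a₂))
        (Matrix.fromCols (-(p.1 • (1 : Matrix (Fin k) (Fin k) ℂ))) (-(p.2.2 • a₁))))
      (p.2.2 • b))
    (Matrix.fromCols
      (Matrix.fromCols
        (Matrix.fromCols (q.1 • x) (q.1 • (1 : Matrix (Fin k) (Fin k) ℂ)))
        (Matrix.fromCols (q.2 • x) (q.2 • (1 : Matrix (Fin k) (Fin k) ℂ))))
      (0 : Matrix (Fin k) (Fin n) ℂ))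

theorem cpbar_mul {k n : ℕ}
    (a₁ a₂ x : Matrix (Fin k) (Fin k) ℂ)
    (b : Matrix (Fin k) (Fin n) ℂ) (c : Matrix (Fin n) (Fin k) ℂ) (p : ℂ × ℂ × ℂ) (q : ℂ × ℂ) :
    cpbarB a₁ a₂ x b p q * cpbarA a₁ a₂ x c p q =
      Matrix.fromBlocks ((p.2.2 * p.2.2) • (a₁ * x * a₂ - a₂ * x * a₁ + b * c))
        (-((p.1 * q.1 + p.2.1 * q.2) • (1 : Matrix (Fin k) (Fin k) ℂ)))
        ((p.1 * q.1 + p.2.1 * q.2) • (1 : Matrix (Fin k) (Fin k) ℂ)) 0 := by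
  unfold cpbarA cpbarB
  rw [Matrix.fromRows_mul_fromCols]
  simp only [Matrix.fromCols_mul_fromRows]
  congr 1 <;>
  · simp only [Matrix.mul_sub, Matrix.smul_mul, Matrix.mul_smul, Matrix.neg_mul, Matrix.mul_neg,
      Matrix.one_mul, Matrix.mul_one, Matrix.mul_zero, Matrix.zero_mul, ← Matrix.mul_assoc]
    module

/-- `B(p,q)·A(p,q) = 0` for all `p = (x₁,x₂,x₃) ∈ ℂ³` and `q = (y₁,y₂) ∈ ℂ²` with
`x₁y₁ + x₂y₂ = 0` iff the integrability condition `a₁xa₂ − a₂xa₁ + bc = 0` holds. -/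
theorem cpbar_monad_integrability {k n : ℕ}
    (a₁ a₂ x : Matrix (Fin k) (Fin k) ℂ)
    (b : Matrix (Fin k) (Fin n) ℂ) (c : Matrix (Fin n) (Fin k) ℂ) :
    (∀ (p : ℂ × ℂ × ℂ) (q : ℂ × ℂ), p.1 * q.1 + p.2.1 * q.2 = 0 →
      cpbarB a₁ a₂ x b p q * cpbarA a₁ a₂ x c p q = 0) ↔
    a₁ * x * a₂ - a₂ * x * a₁ + b * c = 0 := by
  constructor
  · intro h
    have h1 := h (0, 0, 1) (0, 0) (by simp)
    rw [cpbar_mul, ← Matrix.fromBlocks_zero, Matrix.fromBlocks_inj] at h1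
    simpa using h1.1
  · intro h p q hpq
    rw [cpbar_mul, h, hpq]
    simp
end

section
/- Let Φ ∈ M_{k×k}(ℂ) be symmetric (Φᵀ = Φ) and invertible, let α₁, α₂ ∈ M_{k×k}(ℂ) satisfy (Φαᵢ)ᵀ = Φαᵢ, and let γ ∈ M_{n×k}(ℂ) where n is even with standard symplectic matrix J. For every (x₁,x₂,x₃) ∈ ℂ³ one has the matrix identity A(x)ᵀ·βᵀ·A(x) = −x₃²·(Φ(α₁α₂ − α₂α₁) + γᵀJγ). Consequently A(x)ᵀβᵀA(x) = 0 for all (x₁,x₂,x₃) ∈ ℂ³ (the anti-self-dual monad condition for the Sp(n/2) instanton construction on S⁴) if and only if Φ(α₁α₂ − α₂α₁) + γᵀJγ = 0. -/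
open Matrix

/-- The standard symplectic matrix `J = [[0, −I_m],[I_m, 0]]` on `ℂⁿ = ℂᵐ ⊕ ℂᵐ`. -/
noncomputable def stdSymplectic (m : ℕ) : Matrix (Fin m ⊕ Fin m) (Fin m ⊕ Fin m) ℂ :=
  Matrix.fromBlocks 0 (-1) 1 0

/-- The monad map `A(x)` for an `Sp`-type `S⁴`-configuration `(α₁, α₂, γ)`:
the block column matrix `(x₁·1 − x₃α₁ ; x₂·1 − x₃α₂ ; x₃γ)`. -/
noncomputable def spA {k m : ℕ} (α₁ α₂ : Matrix (Fin k) (Fin k) ℂ)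
    (γ : Matrix (Fin m ⊕ Fin m) (Fin k) ℂ) (x : ℂ × ℂ × ℂ) :
    Matrix ((Fin k ⊕ Fin k) ⊕ (Fin m ⊕ Fin m)) (Fin k) ℂ :=
  Matrix.fromRows
    (Matrix.fromRows (x.1 • (1 : Matrix (Fin k) (Fin k) ℂ) - x.2.2 • α₁)
      (x.2.1 • (1 : Matrix (Fin k) (Fin k) ℂ) - x.2.2 • α₂))
    (x.2.2 • γ)

/-- The matrix `β = [[0, Φ, 0],[−Φ, 0, 0],[0, 0, J]]`. -/
noncomputable def spBeta {k m : ℕ} (Φ : Matrix (Fin k) (Fin k) ℂ) :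
    Matrix ((Fin k ⊕ Fin k) ⊕ (Fin m ⊕ Fin m)) ((Fin k ⊕ Fin k) ⊕ (Fin m ⊕ Fin m)) ℂ :=
  Matrix.fromBlocks (Matrix.fromBlocks 0 Φ (-Φ) 0) 0 0 (stdSymplectic m)

/-- For a symmetric invertible `Φ`, `Φαᵢ` symmetric and `γ ∈ M_{n×k}(ℂ)` (`n = 2m`):
`A(x)ᵀβᵀA(x) = −x₃²·(Φ(α₁α₂ − α₂α₁) + γᵀJγ)` for all `x ∈ ℂ³`, and consequently the
anti-self-dual monad condition `A(x)ᵀβᵀA(x) = 0` for all `x` holds iff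
`Φ(α₁α₂ − α₂α₁) + γᵀJγ = 0`. -/
theorem sp_s4_monad_integrability {k m : ℕ}
    (Φ : Matrix (Fin k) (Fin k) ℂ) (hΦsymm : Φᵀ = Φ) (hΦinv : IsUnit Φ)
    (α₁ α₂ : Matrix (Fin k) (Fin k) ℂ)
    (h₁ : (Φ * α₁)ᵀ = Φ * α₁) (h₂ : (Φ * α₂)ᵀ = Φ * α₂)
    (γ : Matrix (Fin m ⊕ Fin m) (Fin k) ℂ) :
    (∀ x : ℂ × ℂ × ℂ,
      (spA α₁ α₂ γ x)ᵀ * (spBeta (m := m) Φ)ᵀ * spA α₁ α₂ γ x =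
        -(x.2.2 ^ 2) • (Φ * (α₁ * α₂ - α₂ * α₁) + γᵀ * stdSymplectic m * γ)) ∧
    ((∀ x : ℂ × ℂ × ℂ,
      (spA α₁ α₂ γ x)ᵀ * (spBeta (m := m) Φ)ᵀ * spA α₁ α₂ γ x = 0) ↔
      Φ * (α₁ * α₂ - α₂ * α₁) + γᵀ * stdSymplectic m * γ = 0) := by
  have key : ∀ x : ℂ × ℂ × ℂ,
      (spA α₁ α₂ γ x)ᵀ * (spBeta (m := m) Φ)ᵀ * spA α₁ α₂ γ x =
        -(x.2.2 ^ 2) • (Φ * (α₁ * α₂ - α₂ * α₁) + γᵀ * stdSymplectic m * γ) := by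
    rintro ⟨a, b, c⟩
    have hJ : (stdSymplectic m)ᵀ = -stdSymplectic m := by
      simp [stdSymplectic, Matrix.fromBlocks_transpose, Matrix.fromBlocks_neg]
    have e₁ : α₁ᵀ * Φ = Φ * α₁ := by rw [← h₁, Matrix.transpose_mul, hΦsymm]
    have e₂ : α₂ᵀ * Φ = Φ * α₂ := by rw [← h₂, Matrix.transpose_mul, hΦsymm]
    have f₁ : (a • (1 : Matrix (Fin k) (Fin k) ℂ) - c • α₁)ᵀ * Φ = Φ * (a • 1 - c • α₁) := by
      simp [Matrix.sub_mul, Matrix.mul_sub, e₁]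
    have f₂ : (b • (1 : Matrix (Fin k) (Fin k) ℂ) - c • α₂)ᵀ * Φ = Φ * (b • 1 - c • α₂) := by
      simp [Matrix.sub_mul, Matrix.mul_sub, e₂]
    have main : (spA α₁ α₂ γ (a, b, c))ᵀ * (spBeta (m := m) Φ)ᵀ * spA α₁ α₂ γ (a, b, c) =
        (b • (1 : Matrix (Fin k) (Fin k) ℂ) - c • α₂)ᵀ * Φ * (a • 1 - c • α₁)
        - (a • (1 : Matrix (Fin k) (Fin k) ℂ) - c • α₁)ᵀ * Φ * (b • 1 - c • α₂)
        - (c • γ)ᵀ * stdSymplectic m * (c • γ) := by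
      simp only [spA, spBeta, Matrix.fromBlocks_transpose, hJ, hΦsymm, Matrix.transpose_fromRows,
        Matrix.fromCols_mul_fromBlocks, Matrix.fromCols_mul_fromRows, Matrix.transpose_zero,
        Matrix.transpose_neg, Matrix.mul_zero, Matrix.mul_neg, Matrix.neg_mul, zero_add, add_zero]
      abel
    rw [main, f₁, f₂]
    simp only [Matrix.transpose_smul, Matrix.smul_mul, Matrix.mul_smul, Matrix.mul_sub,
      Matrix.sub_mul, Matrix.mul_one, Matrix.mul_assoc]
    module
  refine ⟨key, fun h => ?_, fun h x => by rw [key, h, smul_zero]⟩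
  have h1 := h (0, 0, 1)
  rw [key] at h1
  simpa only [one_pow, neg_smul, one_smul, neg_eq_zero] using h1
end

section
/- Let Φ ∈ M_{k×k}(ℂ) be antisymmetric (Φᵀ = −Φ) and invertible (so k is even), let α₁, α₂ ∈ M_{k×k}(ℂ) satisfy (Φαᵢ)ᵀ = −Φαᵢ, and let γ ∈ M_{n×k}(ℂ). For every (x₁,x₂,x₃) ∈ ℂ³ one has the matrix identity A(x)ᵀ·βᵀ·A(x) = x₃²·(Φ(α₁α₂ − α₂α₁) + γᵀγ). Consequently A(x)ᵀβᵀA(x) = 0 for all (x₁,x₂,x₃) ∈ ℂ³ (the self-dual monad condition for the SO(n) instanton construction on S⁴) if and only if the integrability condition Φ(α₁α₂ − α₂α₁) + γᵀγ = 0 holds. -/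
open Matrix

/-- The monad map `A(x)` for an `SO`-type `S⁴`-configuration `(α₁, α₂, γ)`:
the block column matrix `(x₁·1 − x₃α₁ ; x₂·1 − x₃α₂ ; x₃γ)`. -/
noncomputable def soA {k n : ℕ} (α₁ α₂ : Matrix (Fin k) (Fin k) ℂ)
    (γ : Matrix (Fin n) (Fin k) ℂ) (x : ℂ × ℂ × ℂ) :
    Matrix ((Fin k ⊕ Fin k) ⊕ Fin n) (Fin k) ℂ :=
  Matrix.fromRows
    (Matrix.fromRows (x.1 • (1 : Matrix (Fin k) (Fin k) ℂ) - x.2.2 • α₁)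
      (x.2.1 • (1 : Matrix (Fin k) (Fin k) ℂ) - x.2.2 • α₂))
    (x.2.2 • γ)

/-- The matrix `β = [[0, Φ, 0],[−Φ, 0, 0],[0, 0, I_n]]`. -/
noncomputable def soBeta {k n : ℕ} (Φ : Matrix (Fin k) (Fin k) ℂ) :
    Matrix ((Fin k ⊕ Fin k) ⊕ Fin n) ((Fin k ⊕ Fin k) ⊕ Fin n) ℂ :=
  Matrix.fromBlocks (Matrix.fromBlocks 0 Φ (-Φ) 0) 0 0 1

/-- For an antisymmetric invertible `Φ`, `Φαᵢ` antisymmetric and `γ ∈ M_{n×k}(ℂ)`: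
`A(x)ᵀβᵀA(x) = x₃²·(Φ(α₁α₂ − α₂α₁) + γᵀγ)` for all `x ∈ ℂ³`, and consequently the
self-dual monad condition `A(x)ᵀβᵀA(x) = 0` for all `x` holds iff the integrability
condition `Φ(α₁α₂ − α₂α₁) + γᵀγ = 0` holds. -/
theorem so_s4_monad_integrability {k n : ℕ}
    (Φ : Matrix (Fin k) (Fin k) ℂ) (hΦanti : Φᵀ = -Φ) (hΦinv : IsUnit Φ)
    (α₁ α₂ : Matrix (Fin k) (Fin k) ℂ)
    (h₁ : (Φ * α₁)ᵀ = -(Φ * α₁)) (h₂ : (Φ * α₂)ᵀ = -(Φ * α₂))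
    (γ : Matrix (Fin n) (Fin k) ℂ) :
    (∀ x : ℂ × ℂ × ℂ,
      (soA α₁ α₂ γ x)ᵀ * (soBeta (n := n) Φ)ᵀ * soA α₁ α₂ γ x =
        x.2.2 ^ 2 • (Φ * (α₁ * α₂ - α₂ * α₁) + γᵀ * γ)) ∧
    ((∀ x : ℂ × ℂ × ℂ,
      (soA α₁ α₂ γ x)ᵀ * (soBeta (n := n) Φ)ᵀ * soA α₁ α₂ γ x = 0) ↔
      Φ * (α₁ * α₂ - α₂ * α₁) + γᵀ * γ = 0) := by
  have e₁ : α₁ᵀ * Φ = Φ * α₁ := by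
    rw [transpose_mul, hΦanti, mul_neg] at h₁
    exact neg_injective h₁
  have e₂ : α₂ᵀ * Φ = Φ * α₂ := by
    rw [transpose_mul, hΦanti, mul_neg] at h₂
    exact neg_injective h₂
  have key : ∀ x : ℂ × ℂ × ℂ,
      (soA α₁ α₂ γ x)ᵀ * (soBeta (n := n) Φ)ᵀ * soA α₁ α₂ γ x =
        x.2.2 ^ 2 • (Φ * (α₁ * α₂ - α₂ * α₁) + γᵀ * γ) := by
    rintro ⟨a, b, c⟩
    have f₁ : (a • (1 : Matrix (Fin k) (Fin k) ℂ) - c • α₁)ᵀ * Φ = Φ * (a • 1 - c • α₁) := by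
      simp [sub_mul, mul_sub, e₁]
    have f₂ : (b • (1 : Matrix (Fin k) (Fin k) ℂ) - c • α₂)ᵀ * Φ = Φ * (b • 1 - c • α₂) := by
      simp [sub_mul, mul_sub, e₂]
    simp only [soA, soBeta, transpose_fromRows, fromBlocks_transpose, transpose_zero,
      transpose_one, transpose_neg, hΦanti, neg_neg, fromCols_mul_fromBlocks,
      fromCols_mul_fromRows, Matrix.mul_zero, Matrix.mul_one, zero_add, add_zero,
      Matrix.mul_neg, f₁, f₂]
    simp only [transpose_smul, Matrix.mul_sub, Matrix.sub_mul, Matrix.mul_smul, Matrix.smul_mul,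
      Matrix.mul_one, Matrix.neg_mul, Matrix.mul_assoc]
    module
  refine ⟨key, fun h => ?_, fun h x => by rw [key, h, smul_zero]⟩
  have := key (0, 0, 1)
  rw [h] at this
  simpa using this.symm
end

section
/- Let α₁, α₂, ξ ∈ M_{k×k}(ℂ) be symmetric matrices (αᵢᵀ = αᵢ, ξᵀ = ξ) and γ ∈ M_{n×k}(ℂ) where n is even with standard symplectic matrix J. Then A(p,q)ᵀ·βᵀ·A(p,q) = 0 for all p = (x₁,x₂,x₃) ∈ ℂ³ and q = (y₁,y₂) ∈ ℂ² with x₁y₁ + x₂y₂ = 0 (the anti-self-dual monad condition for the Sp(n/2) instanton construction on ℂP̄²), if and only if the integrability condition α₁ξα₂ − α₂ξα₁ − γᵀJγ = 0 holds. -/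
open Matrix

/-- The monad map `A(p,q)` for an `Sp`-type `ℂP̄²`-configuration `(α₁, α₂, ξ, γ)`:
the 5×2 block matrix with first column `(x₃α₁ ; x₁·1 − x₃ξα₁ ; x₃α₂ ; x₂·1 − x₃ξα₂ ; x₃γ)`
and second column `(−y₂·1 ; 0 ; y₁·1 ; 0 ; 0)`. -/
noncomputable def spCpA {k m : ℕ} (α₁ α₂ ξ : Matrix (Fin k) (Fin k) ℂ)
    (γ : Matrix (Fin m ⊕ Fin m) (Fin k) ℂ) (p : ℂ × ℂ × ℂ) (q : ℂ × ℂ) :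
    Matrix (((Fin k ⊕ Fin k) ⊕ (Fin k ⊕ Fin k)) ⊕ (Fin m ⊕ Fin m)) (Fin k ⊕ Fin k) ℂ :=
  Matrix.fromCols
    (Matrix.fromRows
      (Matrix.fromRows
        (Matrix.fromRows (p.2.2 • α₁)
          (p.1 • (1 : Matrix (Fin k) (Fin k) ℂ) - p.2.2 • (ξ * α₁)))
        (Matrix.fromRows (p.2.2 • α₂)
          (p.2.1 • (1 : Matrix (Fin k) (Fin k) ℂ) - p.2.2 • (ξ * α₂))))
      (p.2.2 • γ))
    (Matrix.fromRows
      (Matrix.fromRows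
        (Matrix.fromRows (-(q.2 • (1 : Matrix (Fin k) (Fin k) ℂ))) (0 : Matrix (Fin k) (Fin k) ℂ))
        (Matrix.fromRows (q.1 • (1 : Matrix (Fin k) (Fin k) ℂ)) (0 : Matrix (Fin k) (Fin k) ℂ)))
      (0 : Matrix (Fin m ⊕ Fin m) (Fin k) ℂ))

/-- The matrix `β` with `k×k` (and `n×n`) blocks
`[[0,0,ξ,1,0],[0,0,1,0,0],[−ξ,−1,0,0,0],[−1,0,0,0,0],[0,0,0,0,J]]`. -/
noncomputable def spCpBeta {k m : ℕ} (ξ : Matrix (Fin k) (Fin k) ℂ) :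
    Matrix (((Fin k ⊕ Fin k) ⊕ (Fin k ⊕ Fin k)) ⊕ (Fin m ⊕ Fin m))
      (((Fin k ⊕ Fin k) ⊕ (Fin k ⊕ Fin k)) ⊕ (Fin m ⊕ Fin m)) ℂ :=
  Matrix.fromBlocks
    (Matrix.fromBlocks 0 (Matrix.fromBlocks ξ 1 1 0) (Matrix.fromBlocks (-ξ) (-1) (-1) 0) 0)
    0 0 (stdSymplectic m)

theorem spCp_key {k m : ℕ}
    (α₁ α₂ ξ : Matrix (Fin k) (Fin k) ℂ)
    (h₁ : α₁ᵀ = α₁) (h₂ : α₂ᵀ = α₂) (hξ : ξᵀ = ξ)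
    (γ : Matrix (Fin m ⊕ Fin m) (Fin k) ℂ) (x₁ x₂ x₃ y₁ y₂ : ℂ) :
    (spCpA α₁ α₂ ξ γ (x₁, x₂, x₃) (y₁, y₂))ᵀ * (spCpBeta (m := m) ξ)ᵀ *
      spCpA α₁ α₂ ξ γ (x₁, x₂, x₃) (y₁, y₂) =
    Matrix.fromBlocks
      ((x₃ * x₃) • (α₁ * ξ * α₂ - α₂ * ξ * α₁ - γᵀ * stdSymplectic m * γ))
      (-((x₁ * y₁ + x₂ * y₂) • (1 : Matrix (Fin k) (Fin k) ℂ)))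
      ((x₁ * y₁ + x₂ * y₂) • (1 : Matrix (Fin k) (Fin k) ℂ)) 0 := by
  have hJ : (stdSymplectic m)ᵀ = - stdSymplectic m := by
    simp [stdSymplectic, Matrix.fromBlocks_transpose, Matrix.fromBlocks_neg]
  have hβ : (spCpBeta (k := k) (m := m) ξ)ᵀ = - spCpBeta (m := m) ξ := by
    simp [spCpBeta, Matrix.fromBlocks_transpose, Matrix.fromBlocks_neg, hJ, hξ]
  rw [hβ]
  simp only [spCpA, spCpBeta, Matrix.transpose_fromCols, Matrix.transpose_fromRows,
    Matrix.fromBlocks_neg, Matrix.fromRows_mul, Matrix.mul_fromCols,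
    Matrix.fromCols_mul_fromBlocks, Matrix.fromCols_mul_fromRows]
  simp only [Matrix.transpose_sub, Matrix.transpose_smul, Matrix.transpose_mul,
    Matrix.transpose_one, Matrix.transpose_neg, Matrix.transpose_zero, h₁, h₂, hξ]
  rw [← Matrix.fromRows_fromCols_eq_fromBlocks]
  simp [Matrix.fromCols_mul_fromRows]
  refine ⟨?_, ?_, ?_, ?_⟩
  · simp only [Matrix.mul_sub, Matrix.sub_mul, Matrix.add_mul, Matrix.neg_mul, Matrix.mul_smul,
      Matrix.smul_mul, Matrix.mul_one, Matrix.one_mul, Matrix.mul_assoc]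
    module
  · module
  · module
  · module

/-- For symmetric `α₁, α₂, ξ` and `γ ∈ M_{n×k}(ℂ)` (`n = 2m`): the anti-self-dual monad
condition `A(p,q)ᵀβᵀA(p,q) = 0` for all `p = (x₁,x₂,x₃) ∈ ℂ³`, `q = (y₁,y₂) ∈ ℂ²` with
`x₁y₁ + x₂y₂ = 0` holds iff the integrability condition `α₁ξα₂ − α₂ξα₁ − γᵀJγ = 0` holds. -/
theorem sp_cpbar_monad_integrability {k m : ℕ}
    (α₁ α₂ ξ : Matrix (Fin k) (Fin k) ℂ)
    (h₁ : α₁ᵀ = α₁) (h₂ : α₂ᵀ = α₂) (hξ : ξᵀ = ξ)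
    (γ : Matrix (Fin m ⊕ Fin m) (Fin k) ℂ) :
    (∀ (p : ℂ × ℂ × ℂ) (q : ℂ × ℂ), p.1 * q.1 + p.2.1 * q.2 = 0 →
      (spCpA α₁ α₂ ξ γ p q)ᵀ * (spCpBeta (m := m) ξ)ᵀ * spCpA α₁ α₂ ξ γ p q = 0) ↔
    α₁ * ξ * α₂ - α₂ * ξ * α₁ - γᵀ * stdSymplectic m * γ = 0 := by
  constructor
  · intro h
    have h0 := h (0, 0, 1) (0, 0) (by simp)
    rw [spCp_key α₁ α₂ ξ h₁ h₂ hξ γ, ← Matrix.fromBlocks_zero, Matrix.fromBlocks_inj] at h0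
    simpa using h0.1
  · rintro h ⟨x₁, x₂, x₃⟩ ⟨y₁, y₂⟩ hpq
    simp only at hpq
    rw [spCp_key α₁ α₂ ξ h₁ h₂ hξ γ, h, hpq]
    simp
end

section
/- Let α₁, α₂, ξ ∈ M_{k×k}(ℂ) be antisymmetric matrices (αᵢᵀ = −αᵢ, ξᵀ = −ξ) and γ ∈ M_{n×k}(ℂ). Then A(p,q)ᵀ·βᵀ·A(p,q) = 0 for all p = (x₁,x₂,x₃) ∈ ℂ³ and q = (y₁,y₂) ∈ ℂ² with x₁y₁ + x₂y₂ = 0 (the self-dual monad condition for the SO(n) instanton construction on ℂP̄²), if and only if the integrability condition α₁ξα₂ − α₂ξα₁ + γᵀγ = 0 holds. -/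
open Matrix

/-- The monad map `A(p,q)` for an `SO`-type `ℂP̄²`-configuration `(α₁, α₂, ξ, γ)`:
the 5×2 block matrix with first column `(x₃α₁ ; x₁·1 − x₃ξα₁ ; x₃α₂ ; x₂·1 − x₃ξα₂ ; x₃γ)`
and second column `(−y₂·1 ; 0 ; y₁·1 ; 0 ; 0)`. -/
noncomputable def soCpA {k n : ℕ} (α₁ α₂ ξ : Matrix (Fin k) (Fin k) ℂ)
    (γ : Matrix (Fin n) (Fin k) ℂ) (p : ℂ × ℂ × ℂ) (q : ℂ × ℂ) :
    Matrix (((Fin k ⊕ Fin k) ⊕ (Fin k ⊕ Fin k)) ⊕ Fin n) (Fin k ⊕ Fin k) ℂ :=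
  Matrix.fromCols
    (Matrix.fromRows
      (Matrix.fromRows
        (Matrix.fromRows (p.2.2 • α₁)
          (p.1 • (1 : Matrix (Fin k) (Fin k) ℂ) - p.2.2 • (ξ * α₁)))
        (Matrix.fromRows (p.2.2 • α₂)
          (p.2.1 • (1 : Matrix (Fin k) (Fin k) ℂ) - p.2.2 • (ξ * α₂))))
      (p.2.2 • γ))
    (Matrix.fromRows
      (Matrix.fromRows
        (Matrix.fromRows (-(q.2 • (1 : Matrix (Fin k) (Fin k) ℂ))) (0 : Matrix (Fin k) (Fin k) ℂ))
        (Matrix.fromRows (q.1 • (1 : Matrix (Fin k) (Fin k) ℂ)) (0 : Matrix (Fin k) (Fin k) ℂ)))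
      (0 : Matrix (Fin n) (Fin k) ℂ))

/-- The matrix `β` with `k×k` (and `n×n`) blocks
`[[0,0,ξ,1,0],[0,0,−1,0,0],[−ξ,−1,0,0,0],[1,0,0,0,0],[0,0,0,0,I_n]]`. -/
noncomputable def soCpBeta {k n : ℕ} (ξ : Matrix (Fin k) (Fin k) ℂ) :
    Matrix (((Fin k ⊕ Fin k) ⊕ (Fin k ⊕ Fin k)) ⊕ Fin n)
      (((Fin k ⊕ Fin k) ⊕ (Fin k ⊕ Fin k)) ⊕ Fin n) ℂ :=
  Matrix.fromBlocks
    (Matrix.fromBlocks 0 (Matrix.fromBlocks ξ 1 (-1) 0) (Matrix.fromBlocks (-ξ) (-1) 1 0) 0)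
    0 0 1

lemma soCp_product {k n : ℕ}
    (α₁ α₂ ξ : Matrix (Fin k) (Fin k) ℂ)
    (h₁ : α₁ᵀ = -α₁) (h₂ : α₂ᵀ = -α₂) (hξ : ξᵀ = -ξ)
    (γ : Matrix (Fin n) (Fin k) ℂ) (p : ℂ × ℂ × ℂ) (q : ℂ × ℂ) :
    (soCpA α₁ α₂ ξ γ p q)ᵀ * (soCpBeta (n := n) ξ)ᵀ * soCpA α₁ α₂ ξ γ p q =
    Matrix.fromBlocks ((p.2.2 * p.2.2) • (α₁ * ξ * α₂ - α₂ * ξ * α₁ + γᵀ * γ))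
      (-(p.1 * q.1 + p.2.1 * q.2) • (1 : Matrix (Fin k) (Fin k) ℂ))
      (-(p.1 * q.1 + p.2.1 * q.2) • (1 : Matrix (Fin k) (Fin k) ℂ)) 0 := by
  obtain ⟨x₁, x₂, x₃⟩ := p
  obtain ⟨y₁, y₂⟩ := q
  have hB : (soCpBeta (n := n) ξ)ᵀ * soCpA α₁ α₂ ξ γ (x₁, x₂, x₃) (y₁, y₂) =
      Matrix.fromCols
        (Matrix.fromRows (Matrix.fromRows
          (Matrix.fromRows (x₂ • 1) (-(x₃ • α₂))) (Matrix.fromRows (-(x₁ • 1)) (x₃ • α₁))) (x₃ • γ))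
        (Matrix.fromRows (Matrix.fromRows
          (Matrix.fromRows (y₁ • ξ) (-(y₁ • 1))) (Matrix.fromRows (y₂ • ξ) (-(y₂ • 1)))) 0) := by
    simp only [soCpA, soCpBeta, fromBlocks_transpose, Matrix.mul_fromCols,
      fromBlocks_mul_fromRows, hξ, transpose_neg, transpose_zero, transpose_one]
    congr 1
    · congr 1
      · simp only [Matrix.zero_mul, zero_add, add_zero, fromBlocks_mul_fromRows]
        congr 1 <;> congr 1 <;> simp <;> abel
      · simp
    · congr 1
      · simp only [Matrix.zero_mul, zero_add, add_zero, fromBlocks_mul_fromRows]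
        congr 1 <;> congr 1 <;> simp
      · simp
  rw [Matrix.mul_assoc, hB]
  simp only [soCpA, transpose_fromCols, transpose_fromRows, fromRows_mul_fromCols,
    fromCols_mul_fromRows, transpose_sub, transpose_smul, transpose_mul, transpose_neg,
    transpose_one, transpose_zero, h₁, h₂, hξ]
  congr 1
  · simp only [Matrix.sub_mul, Matrix.smul_mul, Matrix.mul_smul, Matrix.neg_mul, Matrix.mul_neg,
      Matrix.one_mul, Matrix.mul_one, neg_neg, smul_neg]
    module
  · simp only [Matrix.sub_mul, Matrix.smul_mul, Matrix.mul_smul, Matrix.neg_mul, Matrix.mul_neg,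
      Matrix.one_mul, Matrix.mul_one, neg_neg, smul_neg, Matrix.mul_zero]
    module
  · simp only [Matrix.smul_mul, Matrix.mul_smul, Matrix.neg_mul, Matrix.mul_neg,
      Matrix.one_mul, Matrix.mul_one, neg_neg, smul_neg, Matrix.zero_mul]
    module
  · simp only [Matrix.smul_mul, Matrix.mul_smul, Matrix.neg_mul, Matrix.mul_neg,
      Matrix.one_mul, Matrix.mul_one, neg_neg, smul_neg, Matrix.zero_mul]
    module

/-- For antisymmetric `α₁, α₂, ξ` and `γ ∈ M_{n×k}(ℂ)`: the self-dual monad condition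
`A(p,q)ᵀβᵀA(p,q) = 0` for all `p = (x₁,x₂,x₃) ∈ ℂ³`, `q = (y₁,y₂) ∈ ℂ²` with
`x₁y₁ + x₂y₂ = 0` holds iff the integrability condition `α₁ξα₂ − α₂ξα₁ + γᵀγ = 0` holds. -/
theorem so_cpbar_monad_integrability {k n : ℕ}
    (α₁ α₂ ξ : Matrix (Fin k) (Fin k) ℂ)
    (h₁ : α₁ᵀ = -α₁) (h₂ : α₂ᵀ = -α₂) (hξ : ξᵀ = -ξ)
    (γ : Matrix (Fin n) (Fin k) ℂ) :
    (∀ (p : ℂ × ℂ × ℂ) (q : ℂ × ℂ), p.1 * q.1 + p.2.1 * q.2 = 0 →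
      (soCpA α₁ α₂ ξ γ p q)ᵀ * (soCpBeta (n := n) ξ)ᵀ * soCpA α₁ α₂ ξ γ p q = 0) ↔
    α₁ * ξ * α₂ - α₂ * ξ * α₁ + γᵀ * γ = 0 := by
  constructor
  · intro h
    have h' := h (0, 0, 1) (0, 0) (by simp)
    rw [soCp_product α₁ α₂ ξ h₁ h₂ hξ γ, ← fromBlocks_zero, fromBlocks_inj] at h'
    simpa using h'.1
  · intro h p q hpq
    rw [soCp_product α₁ α₂ ξ h₁ h₂ hξ γ, h, hpq]
    simp
end

section
/- The action of GL(k,ℂ) on nondegenerate integrable S⁴-configurations is free: if (a₁, a₂, b, c) is an integrable (a₁a₂ − a₂a₁ + bc = 0) and nondegenerate S⁴-configuration and g ∈ GL(k,ℂ) satisfies ga₁g⁻¹ = a₁, ga₂g⁻¹ = a₂, gb = b and cg⁻¹ = c, then g = 1. -/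
open Matrix

/-- The monad map `A(x)` of an `S⁴`-configuration `(a₁, a₂, b, c)`. -/
noncomputable def monadA {k n : ℕ} (a₁ a₂ : Matrix (Fin k) (Fin k) ℂ)
    (c : Matrix (Fin n) (Fin k) ℂ) (x : ℂ × ℂ × ℂ) :
    Matrix ((Fin k ⊕ Fin k) ⊕ Fin n) (Fin k) ℂ :=
  Matrix.fromRows
    (Matrix.fromRows (x.1 • (1 : Matrix (Fin k) (Fin k) ℂ) - x.2.2 • a₁)
      (x.2.1 • (1 : Matrix (Fin k) (Fin k) ℂ) - x.2.2 • a₂))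
    (x.2.2 • c)

/-- The monad map `B(x)` of an `S⁴`-configuration `(a₁, a₂, b, c)`. -/
noncomputable def monadB {k n : ℕ} (a₁ a₂ : Matrix (Fin k) (Fin k) ℂ)
    (b : Matrix (Fin k) (Fin n) ℂ) (x : ℂ × ℂ × ℂ) :
    Matrix (Fin k) ((Fin k ⊕ Fin k) ⊕ Fin n) ℂ :=
  Matrix.fromCols
    (Matrix.fromCols (-(x.2.1 • (1 : Matrix (Fin k) (Fin k) ℂ)) + x.2.2 • a₂)
      (x.1 • (1 : Matrix (Fin k) (Fin k) ℂ) - x.2.2 • a₁))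
    (x.2.2 • b)

theorem exists_eig_in {V : Type*} [AddCommGroup V] [Module ℂ V] [FiniteDimensional ℂ V]
    (f : V →ₗ[ℂ] V) (W : Submodule ℂ V) (hW : ∀ v ∈ W, f v ∈ W) (w : V) (hw : w ∈ W)
    (hw0 : w ≠ 0) : ∃ μ : ℂ, ∃ v ∈ W, v ≠ 0 ∧ f v = μ • v := by
  haveI : Nontrivial W := ⟨⟨w, hw⟩, 0, fun h => hw0 (congrArg Subtype.val h)⟩
  obtain ⟨μ, hμ⟩ := Module.End.exists_eigenvalue (f.restrict hW)
  obtain ⟨v, hv⟩ := hμ.exists_hasEigenvector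
  refine ⟨μ, v, v.2, fun h => hv.2 (Subtype.ext h), ?_⟩
  exact congrArg Subtype.val hv.apply_eq_smul

/-- The action of `GL(k,ℂ)` on nondegenerate integrable `S⁴`-configurations is free:
if `(a₁, a₂, b, c)` is integrable and nondegenerate and `g ∈ GL(k,ℂ)` fixes it, then
`g = 1`. -/
theorem s4_action_free {k n : ℕ}
    (a₁ a₂ : Matrix (Fin k) (Fin k) ℂ)
    (b : Matrix (Fin k) (Fin n) ℂ) (c : Matrix (Fin n) (Fin k) ℂ)
    (hint : a₁ * a₂ - a₂ * a₁ + b * c = 0)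
    (hnd : ∀ x : ℂ × ℂ × ℂ, x ≠ 0 →
      Function.Injective (monadA a₁ a₂ c x).mulVec ∧
      Function.Surjective (monadB a₁ a₂ b x).mulVec)
    (g : Matrix (Fin k) (Fin k) ℂ) (hg : IsUnit g)
    (h1 : g * a₁ * g⁻¹ = a₁) (h2 : g * a₂ * g⁻¹ = a₂)
    (h3 : g * b = b) (h4 : c * g⁻¹ = c) :
    g = 1 := by
  have hdet : IsUnit g.det := (Matrix.isUnit_iff_isUnit_det g).1 hg
  have e1 : g * a₁ = a₁ * g := by
    conv_rhs => rw [← h1, Matrix.mul_assoc, Matrix.nonsing_inv_mul g hdet, Matrix.mul_one]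
  have e2 : g * a₂ = a₂ * g := by
    conv_rhs => rw [← h2, Matrix.mul_assoc, Matrix.nonsing_inv_mul g hdet, Matrix.mul_one]
  have e4 : c * g = c := by
    conv_lhs => rw [← h4, Matrix.mul_assoc, Matrix.nonsing_inv_mul g hdet, Matrix.mul_one]
  by_contra hne
  obtain ⟨h, hh⟩ : ∃ h, h = g - 1 := ⟨_, rfl⟩
  have f1 : a₁ * h = h * a₁ := by rw [hh, Matrix.mul_sub, Matrix.sub_mul, e1]; simp
  have f2 : a₂ * h = h * a₂ := by rw [hh, Matrix.mul_sub, Matrix.sub_mul, e2]; simp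
  have f4 : c * h = 0 := by rw [hh, Matrix.mul_sub, e4]; simp
  have hh0 : h ≠ 0 := fun h0 => hne (sub_eq_zero.1 (hh ▸ h0))
  obtain ⟨u, hu⟩ : ∃ u, h *ᵥ u ≠ 0 := by
    by_contra hcon
    push Not at hcon
    exact hh0 (Matrix.ext_of_mulVec_single fun i => by rw [hcon, Matrix.zero_mulVec])
  have cW : ∀ v ∈ LinearMap.range h.mulVecLin, c *ᵥ v = 0 := by
    rintro _ ⟨y, rfl⟩
    simp [f4]
  obtain ⟨l1, w, hw, hw0, hw1⟩ := exists_eig_in a₁.mulVecLin (LinearMap.range h.mulVecLin)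
    (by rintro _ ⟨y, rfl⟩; exact ⟨a₁ *ᵥ y, by simp [f1]⟩) (h *ᵥ u) ⟨u, rfl⟩ hu
  obtain ⟨l2, v, hv, hv0, hv2⟩ := exists_eig_in a₂.mulVecLin
    (LinearMap.range h.mulVecLin ⊓ Module.End.eigenspace a₁.mulVecLin l1)
    (by
      rintro v ⟨hv, hv1⟩
      have hc := cW v hv
      refine ⟨?_, ?_⟩
      · obtain ⟨y, rfl⟩ := hv
        exact ⟨a₂ *ᵥ y, by simp [f2]⟩
      · have hv1 := Module.End.mem_eigenspace_iff.1 hv1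
        refine Module.End.mem_eigenspace_iff.2 ?_
        have := congrArg (fun m => m *ᵥ v) hint
        simp only [Matrix.add_mulVec, Matrix.sub_mulVec, ← Matrix.mulVec_mulVec, hc,
          Matrix.mulVec_zero, add_zero, Matrix.zero_mulVec] at this
        simp only [Matrix.mulVecLin_apply] at hv1 ⊢
        rw [sub_eq_zero.1 this, hv1, Matrix.mulVec_smul])
    w ⟨hw, Module.End.mem_eigenspace_iff.2 hw1⟩ hw0
  have hv1 := Module.End.mem_eigenspace_iff.1 hv.2
  have hc := cW v hv.1
  simp only [Matrix.mulVecLin_apply] at hv1 hv2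
  apply hv0
  apply (hnd (l1, l2, 1) (by simp)).1
  rw [Matrix.mulVec_zero, monadA]
  simp only [Matrix.fromRows_mulVec, Matrix.sub_mulVec, Matrix.smul_mulVec, Matrix.one_mulVec,
    one_smul, hv1, hv2, hc, sub_self]
  ext ((i | i) | i) <;> rfl
end

section
/- The action of GL(k,ℂ)×GL(k,ℂ) on nondegenerate integrable ℂP̄²-configurations is free: if (a₁, a₂, x, b, c) is an integrable (a₁xa₂ − a₂xa₁ + bc = 0) and nondegenerate ℂP̄²-configuration and (g,h) ∈ GL(k,ℂ)×GL(k,ℂ) satisfies ga₁h⁻¹ = a₁, ga₂h⁻¹ = a₂, hxg⁻¹ = x, gb = b and ch⁻¹ = c, then g = 1 and h = 1. -/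
open Matrix

theorem cpbar_eig {k : ℕ} (a₁ a₂ x G H : Matrix (Fin k) (Fin k) ℂ)
    (h1 : G * a₁ = a₁ * H) (h2 : G * a₂ = a₂ * H) (h3 : H * x = x * G)
    (hc : (a₁ * x * a₂ - a₂ * x * a₁) * H = 0) (y₁ y₂ r₁ r₂ : ℂ)
    (hr : r₁ * y₂ - r₂ * y₁ = 1) (w : Fin k → ℂ)
    (hw : H *ᵥ w ≠ 0) (hy : (y₁ • a₁ + y₂ • a₂) *ᵥ (H *ᵥ w) = 0) :
    ∃ (u v z : Fin k → ℂ) (μ : ℂ), u ≠ 0 ∧ u = H *ᵥ z ∧ x *ᵥ v = μ • u ∧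
      a₁ *ᵥ u = y₂ • v ∧ a₂ *ᵥ u = -(y₁ • v) := by
  set M := r₁ • a₁ + r₂ • a₂ with hM
  let N : Submodule ℂ (Fin k → ℂ) :=
    LinearMap.range H.mulVecLin ⊓ LinearMap.ker (y₁ • a₁ + y₂ • a₂).mulVecLin
  have hGM : G * M = M * H := by simp [hM, mul_add, add_mul, h1, h2]
  have hcomm : (y₁ • a₁ + y₂ • a₂) * (x * M) * H = M * x * (y₁ • a₁ + y₂ • a₂) * H := by
    have e : (y₁ • a₁ + y₂ • a₂) * (x * M) - M * x * (y₁ • a₁ + y₂ • a₂)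
        = (y₁ * r₂ - y₂ * r₁) • (a₁ * x * a₂ - a₂ * x * a₁) := by
      simp only [hM, mul_add, add_mul, smul_mul_assoc, mul_smul_comm, ← mul_assoc]
      module
    rw [← sub_eq_zero, ← sub_mul, e, smul_mul_assoc, hc, smul_zero]
  have hinv : ∀ u ∈ N, (x * M).mulVecLin u ∈ N := by
    rintro u ⟨⟨z, rfl⟩, hu⟩
    simp only [LinearMap.mem_ker, mulVecLin_apply, SetLike.mem_coe] at hu
    refine ⟨⟨(x * M) *ᵥ z, ?_⟩, ?_⟩
    · simp only [mulVecLin_apply, mulVec_mulVec]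
      rw [← mul_assoc, h3, mul_assoc, mul_assoc, hGM]
    · simp only [LinearMap.mem_ker, mulVecLin_apply, SetLike.mem_coe]
      rw [mulVec_mulVec, mulVec_mulVec, hcomm, ← mulVec_mulVec, ← mulVec_mulVec, hu, mulVec_zero]
  have hwN : H *ᵥ w ∈ N := ⟨⟨w, rfl⟩, hy⟩
  have : Nontrivial N := ⟨⟨⟨H *ᵥ w, hwN⟩, 0, fun e => hw (congrArg Subtype.val e)⟩⟩
  obtain ⟨μ, hμ⟩ := Module.End.exists_eigenvalue (((x * M).mulVecLin).restrict hinv)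
  obtain ⟨⟨u, huN⟩, hu⟩ := hμ.exists_hasEigenvector
  have hu0 : u ≠ 0 := fun e => hu.2 (Subtype.ext e)
  have hue : (x * M) *ᵥ u = μ • u := congrArg Subtype.val hu.apply_eq_smul
  obtain ⟨⟨z, hz⟩, hk⟩ := huN
  simp only [LinearMap.mem_ker, mulVecLin_apply, SetLike.mem_coe] at hk
  have hk' : y₁ • a₁ *ᵥ u + y₂ • a₂ *ᵥ u = 0 := by
    simpa [add_mulVec, smul_mulVec] using hk
  refine ⟨u, M *ᵥ u, z, μ, hu0, hz.symm, by rw [mulVec_mulVec, hue], ?_, ?_⟩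
  · rw [hM, add_mulVec, smul_mulVec, smul_mulVec]
    linear_combination (norm := module) (-(hr) • (a₁ *ᵥ u)) - r₂ • hk'
  · rw [hM, add_mulVec, smul_mulVec, smul_mulVec]
    linear_combination (norm := module) (-(hr) • (a₂ *ᵥ u)) + r₁ • hk'

theorem cpbar_r (y₁ y₂ : ℂ) (h : (y₁, y₂) ≠ 0) : ∃ r₁ r₂ : ℂ, r₁ * y₂ - r₂ * y₁ = 1 := by
  by_cases h1 : y₁ = 0
  · have : y₂ ≠ 0 := by rintro rfl; exact h (by simp [h1])
    exact ⟨y₂⁻¹, 0, by simp [this]⟩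
  · exact ⟨0, -y₁⁻¹, by simp [h1]⟩

theorem cpbar_pencil {k : ℕ} (a₁ a₂ G H : Matrix (Fin k) (Fin k) ℂ)
    (h1 : G * a₁ = a₁ * H) (h2 : G * a₂ = a₂ * H)
    (hi : ∀ y₁ y₂ : ℂ, (y₁, y₂) ≠ 0 → ∀ w, (y₁ • a₁ + y₂ • a₂) *ᵥ (H *ᵥ w) = 0 → H *ᵥ w = 0)
    (hs : ∀ y₁ y₂ : ℂ, (y₁, y₂) ≠ 0 → ∀ w, (y₁ • a₁ + y₂ • a₂)ᵀ *ᵥ (Gᵀ *ᵥ w) = 0 →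
      Gᵀ *ᵥ w = 0) : H = 0 := by
  -- a₂ restricted to range H → range G
  let E := LinearMap.range H.mulVecLin
  let F := LinearMap.range G.mulVecLin
  have m : ∀ a : Matrix (Fin k) (Fin k) ℂ, G * a = a * H → ∀ u ∈ E, a.mulVecLin u ∈ F := by
    rintro a ha _ ⟨z, rfl⟩
    exact ⟨a *ᵥ z, by simp [mulVec_mulVec, ha]⟩
  let f₁ : E →ₗ[ℂ] F := a₁.mulVecLin.restrict (m a₁ h1)
  let f₂ : E →ₗ[ℂ] F := a₂.mulVecLin.restrict (m a₂ h2)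
  have inj : Function.Injective f₂ := by
    rw [← LinearMap.ker_eq_bot, LinearMap.ker_eq_bot']
    rintro ⟨_, z, rfl⟩ hu
    have := congrArg Subtype.val hu
    exact Subtype.ext (hi 0 1 (by simp) z (by simpa [f₂] using this))
  have rk : Module.finrank ℂ F ≤ Module.finrank ℂ E := by
    -- rank G = rank (a₂ᵀ Gᵀ) = rank (G a₂) = rank (a₂ H) ≤ rank H
    have k1 : LinearMap.ker (a₂ᵀ * Gᵀ).mulVecLin = LinearMap.ker Gᵀ.mulVecLin := by
      ext w
      simp only [LinearMap.mem_ker, mulVecLin_apply]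
      constructor
      · intro e
        exact hs 0 1 (by simp) w (by simpa [mulVec_mulVec] using e)
      · intro e
        rw [← mulVec_mulVec, e, mulVec_zero]
    have r1 := LinearMap.finrank_range_add_finrank_ker (a₂ᵀ * Gᵀ).mulVecLin
    have r2 := LinearMap.finrank_range_add_finrank_ker Gᵀ.mulVecLin
    have r3 : (a₂ᵀ * Gᵀ).rank = Gᵀ.rank := by
      unfold Matrix.rank; rw [k1] at r1; omega
    rw [← transpose_mul, rank_transpose, rank_transpose, h2] at r3
    have := rank_mul_le_right a₂ H
    rw [r3] at this
    exact this
  have eq : Module.finrank ℂ E = Module.finrank ℂ F :=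
    le_antisymm (LinearMap.finrank_le_finrank_of_injective inj) rk
  let e := LinearEquiv.ofInjectiveOfFinrankEq f₂ inj eq
  by_contra hH
  have : Nontrivial E := by
    rw [Submodule.nontrivial_iff_ne_bot]
    intro hb
    apply hH
    have := LinearMap.range_eq_bot.1 hb
    exact Matrix.toLin'.injective (by simpa [Matrix.toLin'_apply'] using this)
  obtain ⟨t, ht⟩ := Module.End.exists_eigenvalue (e.symm.toLinearMap ∘ₗ f₁)
  obtain ⟨⟨_, z, rfl⟩, hu⟩ := ht.exists_hasEigenvector
  have h0 := hu.2
  have he := hu.apply_eq_smul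
  apply h0
  apply Subtype.ext
  apply hi 1 (-t) (by simp) z
  have he2 := congrArg e he
  simp only [LinearMap.comp_apply, LinearEquiv.coe_coe, LinearEquiv.apply_symm_apply, map_smul] at he2
  have he3 := congrArg Subtype.val he2
  have he4 : a₁ *ᵥ (H *ᵥ z) = t • a₂ *ᵥ (H *ᵥ z) := he3
  rw [add_mulVec, smul_mulVec, smul_mulVec, he4]
  module

/-- The action of `GL(k,ℂ)×GL(k,ℂ)` on nondegenerate integrable `ℂP̄²`-configurations is
free: if `(a₁, a₂, x, b, c)` is integrable and nondegenerate and `(g,h)` fixes it, then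
`g = 1` and `h = 1`. -/
theorem cpbar_action_free {k n : ℕ}
    (a₁ a₂ x : Matrix (Fin k) (Fin k) ℂ)
    (b : Matrix (Fin k) (Fin n) ℂ) (c : Matrix (Fin n) (Fin k) ℂ)
    (hint : a₁ * x * a₂ - a₂ * x * a₁ + b * c = 0)
    (hnd : ∀ (p : ℂ × ℂ × ℂ) (q : ℂ × ℂ), p ≠ 0 → q ≠ 0 →
      p.1 * q.1 + p.2.1 * q.2 = 0 →
      Function.Injective (cpbarA a₁ a₂ x c p q).mulVec ∧
      Function.Surjective (cpbarB a₁ a₂ x b p q).mulVec)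
    (g h : Matrix (Fin k) (Fin k) ℂ) (hg : IsUnit g) (hh : IsUnit h)
    (h1 : g * a₁ * h⁻¹ = a₁) (h2 : g * a₂ * h⁻¹ = a₂) (h3 : h * x * g⁻¹ = x)
    (h4 : g * b = b) (h5 : c * h⁻¹ = c) :
    g = 1 ∧ h = 1 := by
  have hgd := (Matrix.isUnit_iff_isUnit_det _).1 hg
  have hhd := (Matrix.isUnit_iff_isUnit_det _).1 hh
  have e1 : g * a₁ = a₁ * h := by
    nth_rw 2 [← h1]; rw [nonsing_inv_mul_cancel_right _ _ hhd]
  have e2 : g * a₂ = a₂ * h := by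
    nth_rw 2 [← h2]; rw [nonsing_inv_mul_cancel_right _ _ hhd]
  have e3 : h * x = x * g := by
    nth_rw 2 [← h3]; rw [nonsing_inv_mul_cancel_right _ _ hgd]
  have e5 : c * h = c := by
    nth_rw 1 [← h5]; rw [nonsing_inv_mul_cancel_right _ _ hhd]
  have E1 : (g - 1) * a₁ = a₁ * (h - 1) := by simp [sub_mul, mul_sub, e1]
  have E2 : (g - 1) * a₂ = a₂ * (h - 1) := by simp [sub_mul, mul_sub, e2]
  have E3 : (h - 1) * x = x * (g - 1) := by simp [sub_mul, mul_sub, e3]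
  have E4 : (g - 1) * b = 0 := by simp [Matrix.sub_mul, h4]
  have E5 : c * (h - 1) = 0 := by simp [Matrix.mul_sub, e5]
  clear h1 h2 h3 h4 h5 e1 e2 e3 e5
  generalize hG : g - 1 = G at *
  generalize hH : h - 1 = H at *
  have hint' : a₁ * x * a₂ - a₂ * x * a₁ = -(b * c) := eq_neg_of_add_eq_zero_left hint
  have T1 : Hᵀ * a₁ᵀ = a₁ᵀ * Gᵀ := by rw [← transpose_mul, ← transpose_mul, E1]
  have T2 : Hᵀ * a₂ᵀ = a₂ᵀ * Gᵀ := by rw [← transpose_mul, ← transpose_mul, E2]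
  have T3 : Gᵀ * xᵀ = xᵀ * Hᵀ := by rw [← transpose_mul, ← transpose_mul, E3]
  have T4 : bᵀ * Gᵀ = 0 := by rw [← transpose_mul, E4, transpose_zero]
  have hi : ∀ y₁ y₂ : ℂ, (y₁, y₂) ≠ 0 → ∀ w, (y₁ • a₁ + y₂ • a₂) *ᵥ (H *ᵥ w) = 0 →
      H *ᵥ w = 0 := by
    intro y₁ y₂ hy w hw
    by_contra hne
    obtain ⟨r₁, r₂, hr⟩ := cpbar_r y₁ y₂ hy
    obtain ⟨u, v, z, μ, hu0, huz, hxv, ha1, ha2⟩ := cpbar_eig a₁ a₂ x G H E1 E2 E3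
      (by rw [hint', neg_mul, Matrix.mul_assoc, E5]; simp) y₁ y₂ r₁ r₂ hr w hne hw
    have hcu : c *ᵥ u = 0 := by rw [huz, mulVec_mulVec, E5, zero_mulVec]
    have hA := (hnd (y₂ * μ, -(y₁ * μ), 1) (y₁, y₂) (by simp) hy (by simp; ring)).1
    have : (cpbarA a₁ a₂ x c (y₂ * μ, -(y₁ * μ), 1) (y₁, y₂)) *ᵥ (Sum.elim u v) = 0 := by
      unfold cpbarA
      simp only [fromCols_mulVec, fromRows_mulVec, Sum.elim_comp_inl, Sum.elim_comp_inr, one_smul,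
        sub_mulVec, smul_mulVec, one_mulVec, neg_mulVec, zero_mulVec, ← mulVec_mulVec, ha1, ha2,
        hcu, mulVec_smul, mulVec_neg, hxv]
      ext (((i | i) | (i | i)) | i) <;> simp <;> ring
    have := hA (this.trans (mulVec_zero _).symm)
    exact hu0 (by simpa using congrArg (fun f => f ∘ Sum.inl) this)
  have hs : ∀ y₁ y₂ : ℂ, (y₁, y₂) ≠ 0 → ∀ w, (y₁ • a₁ + y₂ • a₂)ᵀ *ᵥ (Gᵀ *ᵥ w) = 0 →
      Gᵀ *ᵥ w = 0 := by
    intro y₁ y₂ hy w hw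
    by_contra hne
    obtain ⟨r₁, r₂, hr⟩ := cpbar_r y₁ y₂ hy
    obtain ⟨u, v, z, μ, hu0, huz, hxv, ha1, ha2⟩ := cpbar_eig a₁ᵀ a₂ᵀ xᵀ Hᵀ Gᵀ T1 T2 T3
      (by
        have : a₁ᵀ * xᵀ * a₂ᵀ - a₂ᵀ * xᵀ * a₁ᵀ = cᵀ * bᵀ := by
          simp only [← transpose_mul, ← transpose_sub, ← mul_assoc]
          rw [← neg_sub, hint', neg_neg]
        rw [this, Matrix.mul_assoc, T4, Matrix.mul_zero]) y₁ y₂ r₁ r₂ hr w hne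
        (by simpa only [transpose_add, transpose_smul] using hw)
    have hbu : bᵀ *ᵥ u = 0 := by rw [huz, mulVec_mulVec, T4, zero_mulVec]
    have hB := (hnd (y₂ * μ, -(y₁ * μ), 1) (y₁, y₂) (by simp) hy (by simp; ring)).2
    simp only [mulVec_transpose] at hbu hxv ha1 ha2
    have hz : Sum.elim u v ᵥ* (cpbarB a₁ a₂ x b (y₂ * μ, -(y₁ * μ), 1) (y₁, y₂)) = 0 := by
      unfold cpbarB
      simp only [vecMul_fromCols, vecMul_fromRows, Sum.elim_comp_inl, Sum.elim_comp_inr, one_smul,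
        vecMul_smul, vecMul_one, vecMul_neg, vecMul_zero, ha1, ha2, hbu, hxv]
      ext (((i | i) | (i | i)) | i) <;> simp <;> ring
    apply hu0
    have h0 : Sum.elim u v = 0 := by
      apply dotProduct_eq_zero
      intro s
      obtain ⟨s, rfl⟩ := hB s
      rw [dotProduct_mulVec, hz, zero_dotProduct]
    simpa using congrArg (fun f => f ∘ Sum.inl) h0
  have H0 : H = 0 := cpbar_pencil a₁ a₂ G H E1 E2 hi hs
  have G0 : Gᵀ = 0 := cpbar_pencil a₁ᵀ a₂ᵀ Hᵀ Gᵀ T1 T2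
    (by simpa only [transpose_add, transpose_smul] using hs)
    (by simpa only [← transpose_smul, ← transpose_add, transpose_transpose] using hi)
  have G0' : G = 0 := by simpa using G0
  rw [G0'] at hG
  rw [H0] at hH
  exact ⟨sub_eq_zero.1 hG, sub_eq_zero.1 hH⟩
end

section
/- Dual configurations on S⁴: if (a₁, a₂, b, c) is an integrable (a₁a₂ − a₂a₁ + bc = 0) and nondegenerate S⁴-configuration, then the dual tuple (a₁ᵀ, a₂ᵀ, −cᵀ, bᵀ) (with a₁ᵀ, a₂ᵀ ∈ M_{k×k}(ℂ), −cᵀ ∈ M_{k×n}(ℂ), bᵀ ∈ M_{n×k}(ℂ)) is again an integrable and nondegenerate S⁴-configuration; it corresponds to the dual bundle ℰ*. -/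
open Matrix

theorem aux_right_inv {m p : Type*} [Fintype m] [Fintype p] [DecidableEq m] [DecidableEq p]
    (M : Matrix m p ℂ) (h : Function.Surjective M.mulVec) : ∃ R : Matrix p m ℂ, M * R = 1 :=
  Matrix.mulVec_surjective_iff_exists_right_inverse.mp h

theorem aux_left_inv {m p : Type*} [Fintype m] [Fintype p] [DecidableEq m] [DecidableEq p]
    (M : Matrix m p ℂ) (h : Function.Injective M.mulVec) : ∃ L : Matrix p m ℂ, L * M = 1 := by
  have hk : LinearMap.ker (Matrix.toLin' M) = ⊥ := by
    rw [LinearMap.ker_eq_bot]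
    exact h
  obtain ⟨g, hg⟩ := LinearMap.exists_leftInverse_of_injective (Matrix.toLin' M) hk
  refine ⟨LinearMap.toMatrix' g, ?_⟩
  have := congrArg LinearMap.toMatrix' hg
  rwa [LinearMap.toMatrix'_comp, LinearMap.toMatrix'_toLin', LinearMap.toMatrix'_id] at this

/-- Dual configurations on `S⁴`: if `(a₁, a₂, b, c)` is an integrable nondegenerate
`S⁴`-configuration, then so is the dual tuple `(a₁ᵀ, a₂ᵀ, −cᵀ, bᵀ)`. -/
theorem s4_dual_configuration {k n : ℕ}
    (a₁ a₂ : Matrix (Fin k) (Fin k) ℂ)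
    (b : Matrix (Fin k) (Fin n) ℂ) (c : Matrix (Fin n) (Fin k) ℂ)
    (hint : a₁ * a₂ - a₂ * a₁ + b * c = 0)
    (hnd : ∀ x : ℂ × ℂ × ℂ, x ≠ 0 →
      Function.Injective (monadA a₁ a₂ c x).mulVec ∧
      Function.Surjective (monadB a₁ a₂ b x).mulVec) :
    (a₁ᵀ * a₂ᵀ - a₂ᵀ * a₁ᵀ + (-cᵀ) * bᵀ = 0) ∧
    (∀ x : ℂ × ℂ × ℂ, x ≠ 0 →
      Function.Injective (monadA a₁ᵀ a₂ᵀ bᵀ x).mulVec ∧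
      Function.Surjective (monadB a₁ᵀ a₂ᵀ (-cᵀ) x).mulVec) := by
  refine ⟨?_, fun x hx => ⟨?_, ?_⟩⟩
  · have h := congrArg Matrix.transpose hint
    simp only [transpose_add, transpose_sub, transpose_mul, transpose_zero] at h
    rw [Matrix.neg_mul, ← neg_eq_zero, ← h]
    abel
  · obtain ⟨R, hR⟩ := aux_right_inv _ (hnd x hx).2
    have hR' : Rᵀ * (monadB a₁ a₂ b x)ᵀ = 1 := by
      rw [← transpose_mul, hR, transpose_one]
    have key : ∀ v, (monadA a₁ᵀ a₂ᵀ bᵀ x).mulVec v = 0 → v = 0 := by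
      intro v hv
      have hB : (monadB a₁ a₂ b x)ᵀ.mulVec v = 0 := by
        simp only [monadA, monadB, transpose_fromCols, fromRows_mulVec, transpose_add,
          transpose_sub, transpose_neg, transpose_smul, transpose_one] at hv ⊢
        have h1 := fun i => congrFun hv (Sum.inl (Sum.inl i))
        have h2 := fun i => congrFun hv (Sum.inl (Sum.inr i))
        have h3 := fun i => congrFun hv (Sum.inr i)
        simp only [Sum.elim_inl, Sum.elim_inr, Pi.zero_apply] at h1 h2 h3
        ext i
        rcases i with (i | i) | i
        · have h := h2 i
          simp only [sub_mulVec, Pi.sub_apply] at h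
          simp only [Sum.elim_inl, add_mulVec, neg_mulVec, Pi.add_apply, Pi.neg_apply,
            Pi.zero_apply]
          linear_combination -h
        · exact h1 i
        · exact h3 i
      have := congrArg Rᵀ.mulVec hB
      rwa [mulVec_mulVec, hR', one_mulVec, mulVec_zero] at this
    intro v w hvw
    rw [← sub_eq_zero]
    apply key
    rw [mulVec_sub]
    exact sub_eq_zero.mpr hvw
  · obtain ⟨L, hL⟩ := aux_left_inv _ (hnd x hx).1
    have hL' : (monadA a₁ a₂ c x)ᵀ * Lᵀ = 1 := by
      rw [← transpose_mul, hL, transpose_one]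
    intro w
    have hw : (monadA a₁ a₂ c x)ᵀ.mulVec (Lᵀ.mulVec w) = w := by
      rw [mulVec_mulVec, hL', one_mulVec]
    generalize Lᵀ.mulVec w = u at hw
    refine ⟨Sum.elim (Sum.elim (-(fun i => u (Sum.inl (Sum.inr i))))
      (fun i => u (Sum.inl (Sum.inl i)))) (-(fun i => u (Sum.inr i))), ?_⟩
    rw [← hw]
    simp only [monadA, monadB, transpose_fromRows, fromCols_mulVec, transpose_sub,
      transpose_smul, transpose_one, Sum.elim_comp_inl, Sum.elim_comp_inr, add_mulVec, sub_mulVec,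
      neg_mulVec, mulVec_neg, smul_neg, neg_neg, Function.comp_def, Sum.elim_inl, Sum.elim_inr]
    abel
end

section
/- Dual configurations on ℂP̄²: if (a₁, a₂, x, b, c) is an integrable (a₁xa₂ − a₂xa₁ + bc = 0) and nondegenerate ℂP̄²-configuration, then the dual tuple (a₁ᵀ, a₂ᵀ, xᵀ, −cᵀ, bᵀ) is again an integrable and nondegenerate ℂP̄²-configuration; it corresponds to the dual bundle ℰ*. -/
open Matrix

theorem cpbar_inj_iff {m n : Type*} [Fintype m] [Fintype n] (M : Matrix m n ℂ) :
    Function.Injective M.mulVec ↔ ∀ u, M *ᵥ u = 0 → u = 0 := by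
  exact injective_iff_map_eq_zero M.mulVecLin

theorem cpbar_surj_iff {m n : Type*} [Fintype m] [Fintype n] [DecidableEq m] [DecidableEq n]
    (M : Matrix m n ℂ) :
    Function.Surjective M.mulVec ↔ ∀ u, u ᵥ* M = 0 → u = 0 := by
  rw [mulVec_surjective_iff_exists_right_inverse]
  constructor
  · rintro ⟨R, hR⟩ u hu
    have : u ᵥ* (M * R) = 0 := by rw [← vecMul_vecMul, hu, zero_vecMul]
    simpa [hR] using this
  · intro h
    have hk : LinearMap.ker (Matrix.toLin' Mᵀ) = ⊥ := by
      rw [LinearMap.ker_eq_bot']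
      intro u hu
      apply h
      simpa [mulVec_transpose] using hu
    obtain ⟨g, hg⟩ := LinearMap.exists_leftInverse_of_injective _ hk
    refine ⟨(LinearMap.toMatrix' g)ᵀ, ?_⟩
    have h2 : LinearMap.toMatrix' g * Mᵀ = 1 := by
      have := congrArg LinearMap.toMatrix' hg
      simpa [LinearMap.toMatrix'_comp] using this
    have := congrArg Matrix.transpose h2
    simpa using this

theorem cpbar_elim_zero {α β : Type*} (f : α → ℂ) (g : β → ℂ) :
    Sum.elim f g = 0 ↔ f = 0 ∧ g = 0 := by
  constructor
  · intro h
    exact ⟨funext fun i => congrFun h (Sum.inl i), funext fun i => congrFun h (Sum.inr i)⟩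
  · rintro ⟨rfl, rfl⟩
    ext (_ | _) <;> rfl

theorem cpbar_elim_add {α β : Type*} (f f' : α → ℂ) (g g' : β → ℂ) :
    Sum.elim f g + Sum.elim f' g' = Sum.elim (f + f') (g + g') := by
  ext (_ | _) <;> rfl

theorem cpbar_ker {k n : ℕ} (a₁ a₂ x : Matrix (Fin k) (Fin k) ℂ)
    (c : Matrix (Fin n) (Fin k) ℂ) (d : Matrix (Fin k) (Fin n) ℂ) (hd : d = cᵀ ∨ d = -cᵀ)
    (p : ℂ × ℂ × ℂ) (q : ℂ × ℂ) (u : Fin k ⊕ Fin k → ℂ) :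
    cpbarA a₁ a₂ x c p q *ᵥ u = 0 ↔ u ᵥ* cpbarB a₁ᵀ a₂ᵀ xᵀ d p q = 0 := by
  obtain ⟨x₁, x₂, x₃⟩ := p
  obtain ⟨y₁, y₂⟩ := q
  have hdz : (u ∘ Sum.inl) ᵥ* (x₃ • d) = 0 ↔ x₃ • (c *ᵥ (u ∘ Sum.inl)) = 0 := by
    rcases hd with rfl | rfl <;> simp [vecMul_smul, vecMul_transpose, vecMul_neg]
  simp only [cpbarA, cpbarB, fromCols_mulVec, fromRows_mulVec, vecMul_fromRows, vecMul_fromCols,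
    cpbar_elim_add, cpbar_elim_zero, hdz, vecMul_zero, add_zero, zero_mulVec]
  generalize u ∘ Sum.inl = v
  generalize u ∘ Sum.inr = w
  simp only [vecMul_smul, vecMul_neg, vecMul_one, vecMul_transpose, smul_mulVec, sub_mulVec,
    neg_mulVec, one_mulVec, ← mulVec_mulVec]
  constructor
  · rintro ⟨⟨⟨h1, h2⟩, h3, h4⟩, h5⟩
    have e1 : x₃ • (a₁ *ᵥ v) = y₂ • w := by linear_combination h1
    have e3 : x₃ • (a₂ *ᵥ v) = -(y₁ • w) := by linear_combination h3
    rw [← mulVec_smul, e1, mulVec_smul] at h2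
    rw [← mulVec_smul, e3, mulVec_neg, mulVec_smul] at h4
    refine ⟨⟨⟨?_, ?_⟩, ?_, ?_⟩, h5⟩
    · linear_combination h4
    · linear_combination h3
    · linear_combination -h2
    · linear_combination -h1
  · rintro ⟨⟨⟨h1, h2⟩, h3, h4⟩, h5⟩
    have e1 : x₃ • (a₁ *ᵥ v) = y₂ • w := by linear_combination -h4
    have e3 : x₃ • (a₂ *ᵥ v) = -(y₁ • w) := by linear_combination h2
    rw [← mulVec_smul x, ← mulVec_smul x, e1, e3, mulVec_neg, mulVec_smul, mulVec_smul]
    refine ⟨⟨⟨?_, ?_⟩, ?_, ?_⟩, h5⟩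
    · linear_combination 0
    · linear_combination -h3
    · linear_combination 0
    · linear_combination h1

/-- Dual configurations on `ℂP̄²`: if `(a₁, a₂, x, b, c)` is an integrable nondegenerate
`ℂP̄²`-configuration, then so is the dual tuple `(a₁ᵀ, a₂ᵀ, xᵀ, −cᵀ, bᵀ)`. -/
theorem cpbar_dual_configuration {k n : ℕ}
    (a₁ a₂ x : Matrix (Fin k) (Fin k) ℂ)
    (b : Matrix (Fin k) (Fin n) ℂ) (c : Matrix (Fin n) (Fin k) ℂ)
    (hint : a₁ * x * a₂ - a₂ * x * a₁ + b * c = 0)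
    (hnd : ∀ (p : ℂ × ℂ × ℂ) (q : ℂ × ℂ), p ≠ 0 → q ≠ 0 →
      p.1 * q.1 + p.2.1 * q.2 = 0 →
      Function.Injective (cpbarA a₁ a₂ x c p q).mulVec ∧
      Function.Surjective (cpbarB a₁ a₂ x b p q).mulVec) :
    (a₁ᵀ * xᵀ * a₂ᵀ - a₂ᵀ * xᵀ * a₁ᵀ + (-cᵀ) * bᵀ = 0) ∧
    (∀ (p : ℂ × ℂ × ℂ) (q : ℂ × ℂ), p ≠ 0 → q ≠ 0 →
      p.1 * q.1 + p.2.1 * q.2 = 0 →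
      Function.Injective (cpbarA a₁ᵀ a₂ᵀ xᵀ bᵀ p q).mulVec ∧
      Function.Surjective (cpbarB a₁ᵀ a₂ᵀ xᵀ (-cᵀ) p q).mulVec) := by
  refine ⟨?_, ?_⟩
  · have h := congrArg Matrix.transpose hint
    simp only [transpose_add, transpose_sub, transpose_mul, transpose_zero] at h
    rw [← neg_eq_zero, ← h]
    rw [Matrix.neg_mul, Matrix.mul_assoc, Matrix.mul_assoc]
    abel
  · intro p q hp hq hpq
    obtain ⟨hA, hB⟩ := hnd p q hp hq hpq
    rw [cpbar_inj_iff] at hA ⊢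
    rw [cpbar_surj_iff] at hB ⊢
    constructor
    · intro u hu
      apply hB
      have := (cpbar_ker a₁ᵀ a₂ᵀ xᵀ bᵀ b (Or.inl (by simp)) p q u).1 hu
      simpa using this
    · intro u hu
      exact hA u ((cpbar_ker a₁ a₂ x c (-cᵀ) (Or.inr rfl) p q u).2 hu)
end

section
/- The pullback map j from S⁴-configurations to ℂP̄²-configurations is well defined and intertwines the group actions: fix χ ∈ GL(k,ℂ) and define j(a₁, a₂, b, c) = (a₁χ⁻¹, a₂χ⁻¹, χ, b, cχ⁻¹). If (a₁,a₂,b,c) is an integrable and nondegenerate S⁴-configuration, then j(a₁,a₂,b,c) is an integrable and nondegenerate ℂP̄²-configuration, and for every g ∈ GL(k,ℂ) one has j(g·(a₁,a₂,b,c)) = (g, χgχ⁻¹)·j(a₁,a₂,b,c). -/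
open Matrix

/-- The pullback map `j(a₁,a₂,b,c) = (a₁χ⁻¹, a₂χ⁻¹, χ, b, cχ⁻¹)` sends integrable
nondegenerate `S⁴`-configurations to integrable nondegenerate `ℂP̄²`-configurations,
and intertwines the `GL(k,ℂ)`-action with the `GL(k,ℂ)×GL(k,ℂ)`-action via
`g ↦ (g, χgχ⁻¹)`. -/
theorem pullback_map_well_defined_intertwines {k n : ℕ}
    (χ : Matrix (Fin k) (Fin k) ℂ) (hχ : IsUnit χ)
    (a₁ a₂ : Matrix (Fin k) (Fin k) ℂ)
    (b : Matrix (Fin k) (Fin n) ℂ) (c : Matrix (Fin n) (Fin k) ℂ)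
    (hint : a₁ * a₂ - a₂ * a₁ + b * c = 0)
    (hnd : ∀ x : ℂ × ℂ × ℂ, x ≠ 0 →
      Function.Injective (monadA a₁ a₂ c x).mulVec ∧
      Function.Surjective (monadB a₁ a₂ b x).mulVec) :
    ((a₁ * χ⁻¹) * χ * (a₂ * χ⁻¹) - (a₂ * χ⁻¹) * χ * (a₁ * χ⁻¹) + b * (c * χ⁻¹) = 0) ∧
    (∀ (p : ℂ × ℂ × ℂ) (q : ℂ × ℂ), p ≠ 0 → q ≠ 0 →
      p.1 * q.1 + p.2.1 * q.2 = 0 →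
      Function.Injective (cpbarA (a₁ * χ⁻¹) (a₂ * χ⁻¹) χ (c * χ⁻¹) p q).mulVec ∧
      Function.Surjective (cpbarB (a₁ * χ⁻¹) (a₂ * χ⁻¹) χ b p q).mulVec) ∧
    (∀ g : Matrix (Fin k) (Fin k) ℂ, IsUnit g →
      (((g * a₁ * g⁻¹) * χ⁻¹, (g * a₂ * g⁻¹) * χ⁻¹, χ, g * b, (c * g⁻¹) * χ⁻¹) :
        Matrix (Fin k) (Fin k) ℂ × Matrix (Fin k) (Fin k) ℂ × Matrix (Fin k) (Fin k) ℂ ×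
          Matrix (Fin k) (Fin n) ℂ × Matrix (Fin n) (Fin k) ℂ) =
      (g * (a₁ * χ⁻¹) * (χ * g * χ⁻¹)⁻¹, g * (a₂ * χ⁻¹) * (χ * g * χ⁻¹)⁻¹,
        (χ * g * χ⁻¹) * χ * g⁻¹, g * b, (c * χ⁻¹) * (χ * g * χ⁻¹)⁻¹)) := by
  have hdet : IsUnit χ.det := (Matrix.isUnit_iff_isUnit_det χ).1 hχ
  have h1 : χ⁻¹ * χ = 1 := Matrix.nonsing_inv_mul χ hdet
  have h2 : χ * χ⁻¹ = 1 := Matrix.mul_nonsing_inv χ hdet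
  have cancel : ∀ m : Matrix (Fin k) (Fin k) ℂ, χ⁻¹ * (χ * m) = m := fun m => by
    rw [← Matrix.mul_assoc, h1, Matrix.one_mul]
  have cancelv : ∀ v : Fin k → ℂ, χ⁻¹ *ᵥ (χ *ᵥ v) = v := fun v => by
    rw [Matrix.mulVec_mulVec, h1, Matrix.one_mulVec]
  have cancelv' : ∀ v : Fin k → ℂ, χ *ᵥ (χ⁻¹ *ᵥ v) = v := fun v => by
    rw [Matrix.mulVec_mulVec, h2, Matrix.one_mulVec]
  refine ⟨?_, ?_, ?_⟩
  · have : (a₁ * a₂ - a₂ * a₁ + b * c) * χ⁻¹ = 0 := by rw [hint, Matrix.zero_mul]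
    rw [← this]
    simp only [Matrix.mul_assoc, cancel, Matrix.add_mul, Matrix.sub_mul]
  · rintro ⟨x1, x2, x3⟩ ⟨y1, y2⟩ hp hq -
    obtain ⟨hA, hB⟩ := hnd (x1, x2, x3) hp
    constructor
    · rw [← Matrix.coe_mulVecLin, ← LinearMap.ker_eq_bot, LinearMap.ker_eq_bot']
      intro z hz
      obtain ⟨u, v, rfl⟩ : ∃ u v, z = Sum.elim u v :=
        ⟨z ∘ Sum.inl, z ∘ Sum.inr, (Sum.elim_comp_inl_inr z).symm⟩
      rw [Matrix.mulVecLin_apply, cpbarA] at hz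
      simp only [Matrix.fromCols_mulVec_sumElim, Matrix.fromRows_mulVec] at hz
      have e1 : ∀ i, _ := fun i => congrFun hz (Sum.inl (Sum.inl (Sum.inl i)))
      have e2 : ∀ i, _ := fun i => congrFun hz (Sum.inl (Sum.inl (Sum.inr i)))
      have e3 : ∀ i, _ := fun i => congrFun hz (Sum.inl (Sum.inr (Sum.inl i)))
      have e4 : ∀ i, _ := fun i => congrFun hz (Sum.inl (Sum.inr (Sum.inr i)))
      have e5 : ∀ i, _ := fun i => congrFun hz (Sum.inr i)
      clear hz
      obtain ⟨w, rfl⟩ : ∃ w, u = χ *ᵥ w := ⟨χ⁻¹ *ᵥ u, (cancelv' u).symm⟩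
      simp only [Pi.add_apply, Sum.elim_inl, Sum.elim_inr, Matrix.zero_mulVec, Pi.zero_apply,
        add_zero, Matrix.smul_mulVec, Matrix.sub_mulVec, Matrix.neg_mulVec, Matrix.one_mulVec,
        ← Matrix.mulVec_mulVec, cancelv] at e1 e2 e3 e4 e5
      have f2 : χ *ᵥ (x1 • w - x3 • (a₁ *ᵥ w)) = 0 := by
        rw [Matrix.mulVec_sub, Matrix.mulVec_smul, Matrix.mulVec_smul]; exact funext e2
      have f4 : χ *ᵥ (x2 • w - x3 • (a₂ *ᵥ w)) = 0 := by
        rw [Matrix.mulVec_sub, Matrix.mulVec_smul, Matrix.mulVec_smul]; exact funext e4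
      have f2' := cancelv (x1 • w - x3 • (a₁ *ᵥ w))
      have f4' := cancelv (x2 • w - x3 • (a₂ *ᵥ w))
      rw [f2, Matrix.mulVec_zero] at f2'
      rw [f4, Matrix.mulVec_zero] at f4'
      have hw : w = 0 := by
        apply hA
        rw [Matrix.mulVec_zero, monadA]
        simp only [Matrix.fromRows_mulVec, Matrix.smul_mulVec, Matrix.sub_mulVec,
          Matrix.one_mulVec]
        rw [← f2', ← f4']
        ext i
        rcases i with (i | i) | i
        · rfl
        · rfl
        · exact e5 i
      subst hw
      have hv : v = 0 := by
        funext i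
        have g1 := e1 i
        have g3 := e3 i
        simp only [Matrix.mulVec_zero, mul_zero, Pi.zero_apply, zero_add, Pi.neg_apply,
          Pi.smul_apply, smul_eq_mul, neg_eq_zero, mul_eq_zero] at g1 g3
        rcases g1 with g1 | g1
        · rcases g3 with g3 | g3
          · exact absurd (by simp [g1, g3]) hq
          · exact g3
        · exact g1
      subst hv
      ext i
      rcases i with i | i <;> simp
    · intro z
      obtain ⟨s, t, rfl⟩ : ∃ u v, z = Sum.elim u v :=
        ⟨z ∘ Sum.inl, z ∘ Sum.inr, (Sum.elim_comp_inl_inr z).symm⟩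
      obtain ⟨α, β, hαβ⟩ : ∃ α β : ℂ, y1 * α + y2 * β = 1 := by
        by_cases h : y1 = 0
        · have h' : y2 ≠ 0 := fun h' => hq (by simp [h, h'])
          exact ⟨0, y2⁻¹, by simp [h']⟩
        · exact ⟨y1⁻¹, 0, by simp [h]⟩
      obtain ⟨w, hw⟩ := hB (s - (x3 * α) • (a₂ *ᵥ (χ⁻¹ *ᵥ t)) + (x3 * β) • (a₁ *ᵥ (χ⁻¹ *ᵥ t)))
      obtain ⟨w1, w2, w3, rfl⟩ : ∃ w1 w2 w3, w = Sum.elim (Sum.elim w1 w2) w3 :=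
        ⟨(w ∘ Sum.inl) ∘ Sum.inl, (w ∘ Sum.inl) ∘ Sum.inr, w ∘ Sum.inr, by
          rw [Sum.elim_comp_inl_inr, Sum.elim_comp_inl_inr]⟩
      refine ⟨Sum.elim (Sum.elim (Sum.elim (-w1) (χ *ᵥ w1 + α • t))
        (Sum.elim (-w2) (χ *ᵥ w2 + β • t))) w3, ?_⟩
      rw [monadB] at hw
      rw [cpbarB]
      simp only [Matrix.fromCols_mulVec_sumElim, Matrix.fromRows_mulVec, Matrix.zero_mulVec,
        Matrix.smul_mulVec, Matrix.sub_mulVec, Matrix.neg_mulVec, Matrix.one_mulVec,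
        Matrix.add_mulVec, Matrix.mulVec_add, Matrix.mulVec_neg, Matrix.mulVec_smul,
        ← Matrix.mulVec_mulVec, cancelv] at hw ⊢
      ext i
      rcases i with i | i
      · have := congrFun hw i
        simp only [Sum.elim_inl, Pi.add_apply, Pi.sub_apply, Pi.neg_apply, Pi.smul_apply,
          smul_eq_mul] at this ⊢
        linear_combination this
      · simp only [Sum.elim_inr, Pi.add_apply, Pi.sub_apply, Pi.neg_apply, Pi.smul_apply,
          smul_eq_mul, Pi.zero_apply]
        linear_combination (t i) * hαβ
  · intro g hg
    have hgd : IsUnit g.det := (Matrix.isUnit_iff_isUnit_det g).1 hg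
    have h3 : (χ * g * χ⁻¹)⁻¹ = χ * g⁻¹ * χ⁻¹ := by
      rw [Matrix.mul_inv_rev, Matrix.mul_inv_rev, Matrix.nonsing_inv_nonsing_inv χ hdet,
        Matrix.mul_assoc]
    have h4 : χ * g * χ⁻¹ * χ * g⁻¹ = χ := by
      rw [Matrix.mul_assoc (χ * g), h1, Matrix.mul_one, Matrix.mul_assoc,
        Matrix.mul_nonsing_inv g hgd, Matrix.mul_one]
    rw [h3, h4]
    simp only [Matrix.mul_assoc, cancel]
end
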